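/- arXiv:1111.3778 — 2 statements merged into one kernel-verified Lean document; each statement's English description precedes it below -/
import Mathlib

section
/- Let a, b, c be integers with c ≠ 0 and b ≠ 0, and let α = (a + b√3)/c, ᾱ = (a − b√3)/c. If α is a negative ambiguous number (α < 0 and ᾱ > 0), then exactly one of the following holds: C(α) > 0 and C(ᾱ) < 0 (so C(α) is ambiguous) and C²(α) < 0 and C²(ᾱ) < 0 (so C²(α) is totally negative), or C²(α) > 0 and C²(ᾱ) < 0 (so C²(α) is ambiguous) and C(α) < 0 and C(ᾱ) < 0 (so C(α) is totally negative). -/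
/-!
The map `C(z) = -(1 + z)/z` sends `0 ↦ ∞ ↦ -1 ↦ 0`, so it permutes cyclically the three arcs
`(-1, 0) → (0, ∞) → (-∞, -1) → (-1, 0)` into which these points cut the real projective line.
The number `ᾱ` starts in `(0, ∞)`, so its next two images are negative. The number `α` is
irrational, hence lies in the interior of `(-1, 0)` or of `(-∞, -1)`, and reaches `(0, ∞)` after
one or two steps respectively.
-/

open Set

section PicardC

variable {K : Type*} [Field K]

/-- The generator `C` of the Picard group acting by `z ↦ -(1 + z)/z`. Its pole is not modelled:
`picardC 0` has the junk value `0`. -/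
def picardC (z : K) : K := -(1 + z) / z

theorem picardC_eq_neg_one_sub_inv {z : K} (hz : z ≠ 0) : picardC z = -1 - z⁻¹ := by
  rw [picardC]
  field_simp
  ring

theorem picardC_picardC {z : K} (hz : z ≠ 0) : picardC (picardC z) = -1 / (1 + z) := by
  have one_add_picardC : 1 + picardC z = -z⁻¹ := by
    rw [picardC_eq_neg_one_sub_inv hz]
    ring
  rw [picardC, one_add_picardC, picardC, neg_neg, div_div_eq_mul_div, inv_mul_cancel₀ hz,
    div_neg, neg_div]

variable [LinearOrder K] [IsStrictOrderedRing K]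

theorem mapsTo_picardC_Ioo_neg_one_zero : MapsTo (picardC : K → K) (Ioo (-1) 0) (Ioi 0) :=
  fun _ ⟨hz, hz'⟩ ↦ div_pos_of_neg_of_neg (by linarith) hz'

theorem mapsTo_picardC_Ioi_zero : MapsTo (picardC : K → K) (Ioi 0) (Iio (-1)) := by
  intro z (hz : 0 < z)
  rw [mem_Iio, picardC_eq_neg_one_sub_inv hz.ne']
  exact sub_lt_self _ (inv_pos.mpr hz)

theorem mapsTo_picardC_Iio_neg_one : MapsTo (picardC : K → K) (Iio (-1)) (Ioo (-1) 0) := by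
  intro z (hz : z < -1)
  have hz_neg : z < 0 := by linarith
  refine ⟨?_, div_neg_of_pos_of_neg (by linarith) hz_neg⟩
  rw [picardC_eq_neg_one_sub_inv hz_neg.ne]
  linarith [inv_lt_zero.mpr hz_neg]

theorem negative_ambiguous_C_general {x y : K} (hx : x < 0) (hx_ne : x ≠ -1) (hy : 0 < y) :
    Xor
      ((0 < -(1 + x) / x ∧ -(1 + y) / y < 0) ∧
        (-1 / (1 + x) < 0 ∧ -1 / (1 + y) < 0))
      ((0 < -1 / (1 + x) ∧ -1 / (1 + y) < 0) ∧
        (-(1 + x) / x < 0 ∧ -(1 + y) / y < 0)) := by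
  rw [← picardC_picardC hx.ne, ← picardC_picardC hy.ne']
  have hCy : picardC y < -1 := mapsTo_picardC_Ioi_zero hy
  have hCCy : picardC (picardC y) < 0 := (mapsTo_picardC_Iio_neg_one hCy).2
  have hCy_neg : picardC y < 0 := hCy.trans neg_one_lt_zero
  rcases hx_ne.lt_or_gt with hx_lt | hx_gt
  · have hCx : picardC x ∈ Ioo (-1) 0 := mapsTo_picardC_Iio_neg_one hx_lt
    have hCCx : 0 < picardC (picardC x) := mapsTo_picardC_Ioo_neg_one_zero hCx
    exact .inr ⟨⟨⟨hCCx, hCCy⟩, hCx.2, hCy_neg⟩, fun h ↦ hCCx.not_gt h.2.1⟩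
  · have hCx : 0 < picardC x := mapsTo_picardC_Ioo_neg_one_zero ⟨hx_gt, hx⟩
    have hCCx : picardC (picardC x) < -1 := mapsTo_picardC_Ioi_zero hCx
    exact .inl ⟨⟨⟨hCx, hCy_neg⟩, hCCx.trans neg_one_lt_zero, hCCy⟩, fun h ↦ hCx.not_gt h.2.1⟩

end PicardC

theorem irrational_intCast_add_mul_div {x : ℝ} (hx : Irrational x) (a : ℤ) {b c : ℤ}
    (hb : b ≠ 0) (hc : c ≠ 0) : Irrational ((a + b * x) / c) :=
  ((hx.intCast_mul hb).intCast_add a).div_intCast hc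

/-- If `α = (a + b√3)/c` is a negative ambiguous number
(`α < 0`, `ᾱ > 0`), then exactly one of the following holds:
`C(α) > 0, C(ᾱ) < 0` (so `C(α)` is ambiguous) and `C²(α) < 0, C²(ᾱ) < 0`
(so `C²(α)` is totally negative), or `C²(α) > 0, C²(ᾱ) < 0` (so `C²(α)` is
ambiguous) and `C(α) < 0, C(ᾱ) < 0` (so `C(α)` is totally negative), where
`C(z) = -(1+z)/z` and `C²(z) = -1/(1+z)`. -/
theorem negative_ambiguous_C (a b c : ℤ) (hc : c ≠ 0) (hb : b ≠ 0)
    (α αbar : ℝ)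
    (hα : α = ((a : ℝ) + (b : ℝ) * Real.sqrt 3) / (c : ℝ))
    (hαbar : αbar = ((a : ℝ) - (b : ℝ) * Real.sqrt 3) / (c : ℝ))
    (hneg : α < 0) (hpos : 0 < αbar) :
    Xor'
      ((0 < -(1 + α) / α ∧ -(1 + αbar) / αbar < 0) ∧
        (-1 / (1 + α) < 0 ∧ -1 / (1 + αbar) < 0))
      ((0 < -1 / (1 + α) ∧ -1 / (1 + αbar) < 0) ∧
        (-(1 + α) / α < 0 ∧ -(1 + αbar) / αbar < 0)) := by
  have hα_irr : Irrational α :=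
    hα ▸ irrational_intCast_add_mul_div (Nat.Prime.irrational_sqrt Nat.prime_three) a hb hc
  exact negative_ambiguous_C_general hneg (mod_cast hα_irr.ne_int (-1)) hpos
end

section
/- Let a, b, c be integers with c ≠ 0 and b ≠ 0, and let α = (a + b√3)/c, ᾱ = (a − b√3)/c. If α is a positive ambiguous number (α > 0 and ᾱ < 0), then C(α) < 0, and exactly one of the following holds: C(ᾱ) > 0 (so C(α) is ambiguous) and C²(α) < 0, C²(ᾱ) < 0 (so C²(α) is totally negative), or C(ᾱ) < 0 (so C(α) is totally negative) and C²(α) < 0, C²(ᾱ) > 0 (so C²(α) is ambiguous). -/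
/-!
The signs of `C(α)` and `C²(α)` are forced by `0 < α`, and those of `C(ᾱ)` and `C²(ᾱ)` depend only
on the side of `-1` on which `ᾱ` lies; `ᾱ = -1` is impossible because `ᾱ` is irrational.
-/

section MobiusSigns

variable {K : Type*} [Field K] [LinearOrder K] [IsStrictOrderedRing K] {z : K}

theorem neg_one_add_div_neg_of_pos (hz : 0 < z) : -(1 + z) / z < 0 :=
  div_neg_of_neg_of_pos (by linarith) hz

theorem neg_one_add_div_pos_iff_of_neg (hz : z < 0) : 0 < -(1 + z) / z ↔ -1 < z := by
  rw [lt_div_iff_of_neg hz, zero_mul, neg_lt_zero, neg_lt_iff_pos_add']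

theorem neg_one_add_div_neg_iff_of_neg (hz : z < 0) : -(1 + z) / z < 0 ↔ z < -1 := by
  rw [div_lt_iff_of_neg hz, zero_mul, neg_pos, lt_neg_iff_add_neg']

theorem neg_one_div_one_add_neg_iff : -1 / (1 + z) < 0 ↔ -1 < z := by
  rw [neg_div, neg_lt_zero, one_div_pos, neg_lt_iff_pos_add']

theorem neg_one_div_one_add_pos_iff : 0 < -1 / (1 + z) ↔ z < -1 := by
  rw [neg_div, neg_pos, one_div_neg, lt_neg_iff_add_neg']

theorem positive_ambiguous_C_general {α β : K} (hα : 0 < α) (hβ : β < 0) (hβ_ne : β ≠ -1) :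
    -(1 + α) / α < 0 ∧
      Xor
        (0 < -(1 + β) / β ∧ -1 / (1 + α) < 0 ∧ -1 / (1 + β) < 0)
        (-(1 + β) / β < 0 ∧ -1 / (1 + α) < 0 ∧ 0 < -1 / (1 + β)) := by
  have hα_gt : -1 < α := neg_one_lt_zero.trans hα
  have neg_one_lt_iff : -1 < β ↔ ¬ β < -1 := by rw [not_lt, hβ_ne.symm.le_iff_lt]
  refine ⟨neg_one_add_div_neg_of_pos hα, ?_⟩
  simpa only [neg_one_add_div_pos_iff_of_neg hβ, neg_one_add_div_neg_iff_of_neg hβ,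
    neg_one_div_one_add_neg_iff, neg_one_div_one_add_pos_iff, hα_gt, true_and, and_self,
    xor_iff_iff_not] using neg_one_lt_iff

end MobiusSigns

theorem irrational_intCast_sub_intCast_mul_div_intCast {x : ℝ} (hx : Irrational x) (a : ℤ)
    {b c : ℤ} (hb : b ≠ 0) (hc : c ≠ 0) : Irrational ((a - b * x) / c) :=
  ((hx.intCast_mul hb).intCast_sub a).div_intCast hc

/-- If `α = (a + b√3)/c` is a positive ambiguous number
(`α > 0`, `ᾱ < 0`), then `C(α) < 0`, and exactly one of the following holds:
`C(ᾱ) > 0` (so `C(α)` is ambiguous) and `C²(α) < 0, C²(ᾱ) < 0` (so `C²(α)` is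
totally negative), or `C(ᾱ) < 0` (so `C(α)` is totally negative) and
`C²(α) < 0, C²(ᾱ) > 0` (so `C²(α)` is ambiguous), where `C(z) = -(1+z)/z`
and `C²(z) = -1/(1+z)`. -/
theorem positive_ambiguous_C (a b c : ℤ) (hc : c ≠ 0) (hb : b ≠ 0)
    (α αbar : ℝ)
    (hα : α = ((a : ℝ) + (b : ℝ) * Real.sqrt 3) / (c : ℝ))
    (hαbar : αbar = ((a : ℝ) - (b : ℝ) * Real.sqrt 3) / (c : ℝ))
    (hpos : 0 < α) (hneg : αbar < 0) :
    -(1 + α) / α < 0 ∧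
      Xor'
        (0 < -(1 + αbar) / αbar ∧ -1 / (1 + α) < 0 ∧ -1 / (1 + αbar) < 0)
        (-(1 + αbar) / αbar < 0 ∧ -1 / (1 + α) < 0 ∧ 0 < -1 / (1 + αbar)) := by
  have h_irr : Irrational αbar := hαbar ▸ irrational_intCast_sub_intCast_mul_div_intCast
    (mod_cast Nat.prime_three.irrational_sqrt) a hb hc
  exact positive_ambiguous_C_general hpos hneg (mod_cast h_irr.ne_int (-1))
end
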